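/- Let ρ be a density matrix on ℂ^d and, for i = 1,…,n, let {Π^{(i)}_α}_{α=1}^{k_i} be d×d self-adjoint projections with Π^{(i)}_α Π^{(i)}_β = 0 for α ≠ β and Σ_{α=1}^{k_i} Π^{(i)}_α = 1. Fix an index i with 1 ≤ i ≤ n−1 and suppose that [Π^{(i)}_β, Q^n_{i+1}(α)] = 0 for every β = 1,…,k_i and every multi-index α. Then the sum rule holds at slot i: Σ_{α_i=1}^{k_i} Prob_ω(α_1,…,α_i,…,α_n) = ω( H^{i−1}_1(α)^* Q^n_{i+1}(α) H^{i−1}_1(α) ), i.e. the sum over α_i equals the probability of the history with the i-th observation omitted, for all fixed values of α_1,…,α_{i−1},α_{i+1},…,α_n. -/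

import Mathlib

open scoped ComplexOrder

/-- The history operator `H^n_j(α) = Π^{(n-1)}_{α_{n-1}} ⋯ Π^{(j)}_{α_j}`
(0-based indexing), with `histOp n k P α n = 1`. -/
noncomputable def histOp {M : Type*} [Monoid M] (n : ℕ) (k : Fin n → ℕ)
    (P : (i : Fin n) → Fin (k i) → M) (α : (i : Fin n) → Fin (k i)) (j : ℕ) : M :=
  if h : j < n then histOp n k P α (j + 1) * P ⟨j, h⟩ (α ⟨j, h⟩) else 1
termination_by n - j
decreasing_by omega

/-- The lower part `H^{j}_1(α) = Π^{(j-1)}_{α_{j-1}} ⋯ Π^{(0)}_{α_0}` of a history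
(0-based indexing): the product over the slots `0, …, j−1`. -/
def lowHist {M : Type*} [Monoid M] (n : ℕ) (k : Fin n → ℕ)
    (P : (i : Fin n) → Fin (k i) → M) (α : (i : Fin n) → Fin (k i)) : ℕ → M
  | 0 => 1
  | (j + 1) => (if h : j < n then P ⟨j, h⟩ (α ⟨j, h⟩) else 1) * lowHist n k P α j

/-- A full history splits at slot `j` into its upper and lower parts. -/
theorem histOp_zero_eq_mul_lowHist {M : Type*} [Monoid M] (n : ℕ) (k : Fin n → ℕ)
    (P : (i : Fin n) → Fin (k i) → M) (α : (i : Fin n) → Fin (k i)) {j : ℕ} (hj : j ≤ n) :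
    histOp n k P α 0 = histOp n k P α j * lowHist n k P α j := by
  induction j with
  | zero => simp [lowHist]
  | succ j ih =>
    have hlt : j < n := hj
    rw [ih hlt.le, histOp, dif_pos hlt, lowHist, dif_pos hlt, mul_assoc]

/-- `histOp` from slot `j` on depends only on the outcomes at slots `≥ j`. -/
theorem histOp_update_of_lt {M : Type*} [Monoid M] (n : ℕ) (k : Fin n → ℕ)
    (P : (i : Fin n) → Fin (k i) → M) (α : (i : Fin n) → Fin (k i)) (i : Fin n)
    (β : Fin (k i)) {j : ℕ} (hij : (i : ℕ) < j) :
    histOp n k P (Function.update α i β) j = histOp n k P α j := by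
  by_cases h : j < n
  · have hne : (⟨j, h⟩ : Fin n) ≠ i := Fin.ne_of_gt hij
    rw [histOp, histOp.eq_1 n k P α j, dif_pos h, dif_pos h, Function.update_of_ne hne,
      histOp_update_of_lt n k P α i β (Nat.lt_succ_of_lt hij)]
  · rw [histOp, histOp.eq_1 n k P α j, dif_neg h, dif_neg h]
termination_by n - j
decreasing_by omega

/-- `lowHist` up to slot `j` depends only on the outcomes at slots `< j`. -/
theorem lowHist_update_of_le {M : Type*} [Monoid M] (n : ℕ) (k : Fin n → ℕ)
    (P : (i : Fin n) → Fin (k i) → M) (α : (i : Fin n) → Fin (k i)) (i : Fin n)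
    (β : Fin (k i)) {j : ℕ} (hji : j ≤ i) :
    lowHist n k P (Function.update α i β) j = lowHist n k P α j := by
  induction j with
  | zero => rfl
  | succ j ih =>
    have h : j < n := lt_trans hji i.isLt
    have hne : (⟨j, h⟩ : Fin n) ≠ i := Fin.ne_of_lt hji
    rw [lowHist, lowHist, dif_pos h, dif_pos h, Function.update_of_ne hne,
      ih (Nat.le_of_succ_le hji)]

/-- A history with outcome `β` at slot `i`, factored around that slot. -/
theorem histOp_update_zero {M : Type*} [Monoid M] (n : ℕ) (k : Fin n → ℕ)
    (P : (i : Fin n) → Fin (k i) → M) (α : (i : Fin n) → Fin (k i)) (i : Fin n)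
    (β : Fin (k i)) :
    histOp n k P (Function.update α i β) 0 =
      histOp n k P α (i + 1) * P i β * lowHist n k P α i := by
  rw [histOp_zero_eq_mul_lowHist n k P _ i.isLt.le, lowHist_update_of_le n k P α i β le_rfl,
    histOp, dif_pos i.isLt, histOp_update_of_lt n k P α i β (Nat.lt_succ_self _),
    Fin.eta, Function.update_self]

/-- If a self-adjoint idempotent `p` commutes with `star h * h`, then inserting `p` between
`h` and `l` on both sides is the same as inserting it once. -/
theorem star_mul_self_mul_idempotent_mul {R : Type*} [Semigroup R] [StarMul R] {h p l : R}
    (hsa : star p = p) (hidem : p * p = p) (hcomm : p * (star h * h) = star h * h * p) :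
    star (h * p * l) * (h * p * l) = star l * (star h * h * (p * l)) := by
  calc star (h * p * l) * (h * p * l) = star l * (p * (star h * h) * p * l) := by
        simp only [star_mul, hsa, mul_assoc]
    _ = star l * (star h * h * (p * p * l)) := by rw [hcomm]; simp only [mul_assoc]
    _ = star l * (star h * h * (p * l)) := by rw [hidem]

/-- The sum rule for histories: if the projections `Π^{(i)}_β` at slot `i` commute
with `Q^n_{i+1}(α) = H^n_{i+1}(α)* H^n_{i+1}(α)`, then summing the history
probabilities over the outcome at slot `i` yields the probability of the history
with the `i`-th observation omitted,
`ω(H^{i−1}_1(α)* Q^n_{i+1}(α) H^{i−1}_1(α))`. -/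
theorem history_sum_rule {d : ℕ} (hd : 1 ≤ d)
    (ρ : Matrix (Fin d) (Fin d) ℂ) (hρ : ρ.PosSemidef) (htr : ρ.trace = 1)
    (n : ℕ) (k : Fin n → ℕ) (hk : ∀ i, 1 ≤ k i)
    (P : (i : Fin n) → Fin (k i) → Matrix (Fin d) (Fin d) ℂ)
    (hPsa : ∀ i a, (P i a).IsHermitian)
    (hPorth : ∀ i a b, a ≠ b → P i a * P i b = 0)
    (hPidem : ∀ i a, P i a * P i a = P i a)
    (hPsum : ∀ i, ∑ a, P i a = 1)
    (i : ℕ) (hi : i + 1 < n)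
    (hcomm : ∀ (β : Fin (k ⟨i, by omega⟩)) (α : (i : Fin n) → Fin (k i)),
       P ⟨i, by omega⟩ β * (star (histOp n k P α (i + 1)) * histOp n k P α (i + 1)) =
         (star (histOp n k P α (i + 1)) * histOp n k P α (i + 1)) * P ⟨i, by omega⟩ β) :
    ∀ α : (i : Fin n) → Fin (k i),
      ∑ β : Fin (k ⟨i, by omega⟩),
          (ρ * (star (histOp n k P (Function.update α ⟨i, by omega⟩ β) 0) *
            histOp n k P (Function.update α ⟨i, by omega⟩ β) 0)).trace =
        (ρ * (star (lowHist n k P α i) *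
          ((star (histOp n k P α (i + 1)) * histOp n k P α (i + 1)) *
            lowHist n k P α i))).trace := by
  intro α
  simp only [histOp_update_zero,
    fun β => star_mul_self_mul_idempotent_mul (l := lowHist n k P α i)
      (hPsa ⟨i, by omega⟩ β) (hPidem ⟨i, by omega⟩ β) (hcomm β α)]
  rw [← Matrix.trace_sum]
  simp only [← Finset.mul_sum, ← Finset.sum_mul, hPsum, one_mul]
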